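/- Let 0 < d < 2 and set α* = arcsin(d/2), σ* = arcsin(d/4). For each σ ∈ [0, σ*] there exists a unique δ_RL(σ) ∈ [0, α*] with d_RL(d,σ,δ_RL(σ)) = 2; moreover δ_RL(0) = α*, δ_RL(σ*) = 0, and for δ ∈ [0, α*] one has d_RL(d,σ,δ) > 2 if δ < δ_RL(σ) and d_RL(d,σ,δ) < 2 if δ > δ_RL(σ). -/

import Mathlib

open Real

/-- Distance between the center of the right starting disk and the left final disk,
in `(σ, δ)` coordinates. -/
noncomputable def dRL (d σ δ : ℝ) : ℝ :=
  Real.sqrt (d ^ 2 - 4 * d * Real.cos δ * Real.sin σ + 4 * Real.cos δ ^ 2)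

/-- Let `0 < d < 2`, `α* = arcsin (d/2)`, `σ* = arcsin (d/4)`.
For each `σ ∈ [0, σ*]` there is a unique `δ₀ ∈ [0, α*]` with `d_RL(d, σ, δ₀) = 2`;
moreover `δ₀ = α*` when `σ = 0`, `δ₀ = 0` when `σ = σ*`, and for `δ ∈ [0, α*]`
one has `d_RL > 2` for `δ < δ₀` and `d_RL < 2` for `δ > δ₀`. -/
theorem dRL_boundary_curve (d : ℝ) (hd0 : 0 < d) (hd2 : d < 2) :
    ∀ σ ∈ Set.Icc (0:ℝ) (Real.arcsin (d / 4)),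
      ∃ δ₀ ∈ Set.Icc (0:ℝ) (Real.arcsin (d / 2)),
        dRL d σ δ₀ = 2 ∧
        (∀ δ ∈ Set.Icc (0:ℝ) (Real.arcsin (d / 2)), dRL d σ δ = 2 → δ = δ₀) ∧
        (σ = 0 → δ₀ = Real.arcsin (d / 2)) ∧
        (σ = Real.arcsin (d / 4) → δ₀ = 0) ∧
        (∀ δ ∈ Set.Icc (0:ℝ) (Real.arcsin (d / 2)),
          (δ < δ₀ → 2 < dRL d σ δ) ∧ (δ₀ < δ → dRL d σ δ < 2)) := by
  rintro σ ⟨hσ0, hσ1⟩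
  have hd41 : d / 4 ≤ 1 := by linarith
  have hd21 : d / 2 ≤ 1 := by linarith
  have hsin4 : Real.sin (Real.arcsin (d / 4)) = d / 4 := Real.sin_arcsin (by linarith) hd41
  have hsin2 : Real.sin (Real.arcsin (d / 2)) = d / 2 := Real.sin_arcsin (by linarith) hd21
  have hA0 : 0 ≤ Real.arcsin (d / 2) := Real.arcsin_nonneg.2 (by linarith)
  have hA1 : Real.arcsin (d / 2) < π / 2 := Real.arcsin_lt_pi_div_two.2 (by linarith)
  have hB1 : Real.arcsin (d / 4) ≤ π / 2 := Real.arcsin_le_pi_div_two _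
  have hpi := Real.pi_pos
  have hs0 : 0 ≤ Real.sin σ := Real.sin_nonneg_of_nonneg_of_le_pi hσ0 (by linarith)
  have hs1 : Real.sin σ ≤ d / 4 := by
    rw [← hsin4]
    exact Real.sin_le_sin_of_le_of_le_pi_div_two (by linarith) hB1 hσ1
  have hcpos : ∀ δ ∈ Set.Icc (0:ℝ) (Real.arcsin (d / 2)), 0 < Real.cos δ := fun δ h =>
    Real.cos_pos_of_mem_Ioo ⟨by linarith [h.1], by linarith [h.2]⟩
  have hcA : Real.cos (Real.arcsin (d / 2)) ^ 2 = 1 - (d / 2) ^ 2 := by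
    rw [Real.cos_sq', hsin2]
  have hcA0 := hcpos _ ⟨hA0, le_refl _⟩
  have hcont : Continuous (dRL d σ) := by unfold dRL; fun_prop
  have h4 : Real.sqrt 4 = 2 := by
    rw [show (4:ℝ) = 2 ^ 2 by norm_num]; exact Real.sqrt_sq (by norm_num)
  have hmem : (2:ℝ) ∈ Set.Icc (dRL d σ (Real.arcsin (d / 2))) (dRL d σ 0) := by
    constructor
    · refine le_trans ?_ h4.le
      apply Real.sqrt_le_sqrt
      have := mul_nonneg (mul_nonneg hd0.le hcA0.le) hs0
      nlinarith
    · rw [← h4]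
      apply Real.sqrt_le_sqrt
      rw [Real.cos_zero]
      nlinarith
  obtain ⟨δ₀, hδ₀, he⟩ := intermediate_value_Icc' hA0 hcont.continuousOn hmem
  have hg0 : d ^ 2 - 4 * d * Real.cos δ₀ * Real.sin σ + 4 * Real.cos δ₀ ^ 2 = 4 := by
    unfold dRL at he
    rw [Real.sqrt_eq_iff_mul_self_eq_of_pos (by norm_num)] at he
    linarith
  have hc0 := hcpos _ hδ₀
  have hr : 0 < Real.cos δ₀ - d * Real.sin σ := by
    by_contra hneg
    push Not at hneg
    nlinarith [mul_nonneg hc0.le (sub_nonneg.2 hneg)]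
  have key : ∀ δ ∈ Set.Icc (0:ℝ) (Real.arcsin (d / 2)),
          (δ < δ₀ → 2 < dRL d σ δ) ∧ (δ₀ < δ → dRL d σ δ < 2) := by
    intro δ hδ
    have hc := hcpos _ hδ
    have hfac : d ^ 2 - 4 * d * Real.cos δ * Real.sin σ + 4 * Real.cos δ ^ 2 - 4
        = 4 * ((Real.cos δ - Real.cos δ₀) * (Real.cos δ + (Real.cos δ₀ - d * Real.sin σ))) := by
      linear_combination hg0
    constructor
    · intro hlt
      have h1 : Real.cos δ₀ < Real.cos δ :=
        Real.cos_lt_cos_of_nonneg_of_le_pi hδ.1 (by linarith [hδ₀.2]) hlt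
      have := mul_pos (sub_pos.2 h1) (add_pos hc hr)
      exact (Real.lt_sqrt (by norm_num)).2 (by linarith)
    · intro hlt
      have h1 : Real.cos δ < Real.cos δ₀ :=
        Real.cos_lt_cos_of_nonneg_of_le_pi hδ₀.1 (by linarith [hδ.2]) hlt
      have := mul_pos (sub_pos.2 h1) (add_pos hc hr)
      exact (Real.sqrt_lt' (by norm_num)).2 (by linarith)
  have uniq : ∀ δ ∈ Set.Icc (0:ℝ) (Real.arcsin (d / 2)), dRL d σ δ = 2 → δ = δ₀ := by
    intro δ hδ h
    rcases lt_trichotomy δ δ₀ with hl | hl | hl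
    · linarith [(key δ hδ).1 hl]
    · exact hl
    · linarith [(key δ hδ).2 hl]
  refine ⟨δ₀, hδ₀, he, uniq, ?_, ?_, key⟩
  · intro h
    refine (uniq _ ⟨hA0, le_refl _⟩ ?_).symm
    refine Eq.trans ?_ h4
    unfold dRL
    congr 1
    rw [hcA, h, Real.sin_zero]; ring
  · intro h
    refine (uniq _ ⟨le_refl _, hA0⟩ ?_).symm
    refine Eq.trans ?_ h4
    unfold dRL
    congr 1
    rw [h, hsin4, Real.cos_zero]; ring
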